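/- arXiv:2510.23529 — 5 statements merged into one kernel-verified Lean document; each statement's English description precedes it below -/
import Mathlib

section
/- Let A be a square matrix over a field with Drazin index ind(A) = k, and suppose X is a matrix satisfying A^k = A^{k+1}X. Then the Drazin inverse of A is given by A^D = A^k X^{k+1}; that is, the matrix Y = A^k X^{k+1} satisfies A^{k+1}Y = A^k, YAY = Y, and AY = YA. -/
/-- The Drazin index of a square matrix `A`: the smallest `k` for which there is `X`
with `A^(k+1) * X = A^k`, `X*A*X = X`, `A*X = X*A`. -/
noncomputable def drazinIndex {F ι : Type*} [Field F] [Fintype ι] [DecidableEq ι]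
    (A : Matrix ι ι F) : ℕ :=
  sInf {k : ℕ | ∃ X : Matrix ι ι F,
    A ^ (k + 1) * X = A ^ k ∧ X * A * X = X ∧ A * X = X * A}

/-!
The identity `A ^ k = A ^ (k + 1) * X` says that `A` maps the column space `N` of `A ^ k` onto
itself. By the Orzech property, a surjective endomorphism of a finitely generated module is
injective, so `A` is injective on `N`. Hence an equation between matrices with columns in `N`,
such as `A * Y = Y * A` for `Y = A ^ k * X ^ (k + 1)`, may be checked after multiplying on the
left by `A ^ (k + 1)`, where it follows from `A ^ (k + 1) * Y = A ^ k`.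
-/

/-- `y` satisfies the equations defining the Drazin inverse of `a`, with exponent `k`. The
exponent may exceed the Drazin index of `a`, which is the least `k` for which such a `y` exists. -/
structure IsDrazinInverse {M : Type*} [Monoid M] (k : ℕ) (a y : M) : Prop where
  pow_succ_mul : a ^ (k + 1) * y = a ^ k
  mul_mul_self : y * a * y = y
  commute : Commute a y

section Monoid

variable {M : Type*} [Monoid M] {a x : M} {k : ℕ}

theorem pow_add_mul_pow_eq_pow (h : a ^ k = a ^ (k + 1) * x) (n : ℕ) :
    a ^ (k + n) * x ^ n = a ^ k := by
  induction n with
  | zero => simp only [add_zero, pow_zero, mul_one]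
  | succ n ih =>
    calc a ^ (k + (n + 1)) * x ^ (n + 1)
        = a ^ n * (a ^ (k + 1) * x) * x ^ n := by
          simp only [pow_succ' x, ← mul_assoc, ← pow_add]
          congr 3
          omega
      _ = a ^ k := by rw [← h, ← pow_add, add_comm n, ih]

theorem pow_add_mul_cancel
    (hcancel : ∀ u v, a ^ (k + 1) * u = a ^ (k + 1) * v → a ^ k * u = a ^ k * v)
    {n : ℕ} {u v : M} (h : a ^ (k + n) * u = a ^ (k + n) * v) : a ^ k * u = a ^ k * v := by
  induction n with
  | zero => exact h
  | succ n ih =>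
    have hshift : a ^ (k + 1) * (a ^ n * u) = a ^ (k + 1) * (a ^ n * v) := by
      simpa only [← mul_assoc, ← pow_add, add_right_comm, ← add_assoc] using h
    apply ih
    simpa only [← mul_assoc, ← pow_add] using hcancel _ _ hshift

theorem IsDrazinInverse.of_pow_succ_mul_cancel
    (hcancel : ∀ u v, a ^ (k + 1) * u = a ^ (k + 1) * v → a ^ k * u = a ^ k * v)
    (hx : a ^ k = a ^ (k + 1) * x) : IsDrazinInverse k a (a ^ k * x ^ (k + 1)) := by
  have hpow : a ^ (k + (k + 1)) * x ^ (k + 1) = a ^ k := pow_add_mul_pow_eq_pow hx (k + 1)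
  have hleft : a ^ (k + 1) * (a ^ k * x ^ (k + 1)) = a ^ k := by
    rw [← mul_assoc, ← pow_add, add_comm (k + 1), hpow]
  refine ⟨hleft, ?_, ?_⟩
  · have h : a ^ k * (x ^ (k + 1) * a * (a ^ k * x ^ (k + 1))) = a ^ k * x ^ (k + 1) := by
      apply pow_add_mul_cancel hcancel (n := k + 1)
      calc a ^ (k + (k + 1)) * (x ^ (k + 1) * a * (a ^ k * x ^ (k + 1)))
          = a ^ (k + (k + 1)) * x ^ (k + 1) * a * (a ^ k * x ^ (k + 1)) := by
            simp only [mul_assoc]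
        _ = a ^ (k + (k + 1)) * x ^ (k + 1) := by rw [hpow, ← pow_succ, hleft]
    simpa only [mul_assoc] using h
  · have h : a ^ k * (a * x ^ (k + 1)) = a ^ k * (x ^ (k + 1) * a) := by
      apply pow_add_mul_cancel hcancel (n := k + 1)
      calc a ^ (k + (k + 1)) * (a * x ^ (k + 1))
          = a * (a ^ (k + (k + 1)) * x ^ (k + 1)) := by
            rw [← mul_assoc, pow_mul_comm', mul_assoc]
        _ = a ^ (k + (k + 1)) * (x ^ (k + 1) * a) := by
            rw [← mul_assoc _ _ a, hpow, pow_mul_comm']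
    calc a * (a ^ k * x ^ (k + 1)) = a ^ k * (a * x ^ (k + 1)) := by
          rw [← mul_assoc, ← pow_mul_comm', mul_assoc]
      _ = a ^ k * x ^ (k + 1) * a := by rw [h, mul_assoc]

end Monoid

theorem injOn_of_submodule_map_eq {R M : Type*} [Semiring R] [OrzechProperty R]
    [AddCommMonoid M] [Module R M] {f : M →ₗ[R] M} {N : Submodule R M} (hN : N.FG)
    (hf : N.map f = N) : Set.InjOn f N := by
  have : Module.Finite R N := Module.Finite.iff_fg.mpr hN
  have hmaps : Set.MapsTo f N N := fun v hv => hf ▸ Submodule.mem_map_of_mem hv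
  have hsurj : Set.SurjOn f N N := (congrArg SetLike.coe hf).ge
  exact hmaps.restrict_inj.mp <|
    OrzechProperty.injective_of_surjective_endomorphism (f.restrict hmaps)
      (hmaps.restrict_surjective_iff.mpr hsurj)

section Matrix

open Matrix

variable {R ι : Type*} [Semiring R] [OrzechProperty Rᵐᵒᵖ] [Fintype ι] [DecidableEq ι]
  {A X : Matrix ι ι R} {k : ℕ}

theorem injOn_mulVec_range_pow_mulVec (hX : A ^ k = A ^ (k + 1) * X) :
    Set.InjOn A.mulVec (Set.range (A ^ k).mulVec) := by
  let toEnd (B : Matrix ι ι R) : (ι → R) →ₗ[Rᵐᵒᵖ] (ι → R) := mulVecBilin R Rᵐᵒᵖ B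
  have : Module.Finite Rᵐᵒᵖ R :=
    .of_surjective (LinearMap.toSpanSingleton Rᵐᵒᵖ R 1) fun r => ⟨.op r, one_mul r⟩
  have hcomm (v : ι → R) : A *ᵥ (A ^ k *ᵥ v) = A ^ k *ᵥ (A *ᵥ v) := by
    simp only [mulVec_mulVec, pow_mul_comm']
  refine injOn_of_submodule_map_eq (f := toEnd A) (N := LinearMap.range (toEnd (A ^ k)))
    (Submodule.fg_range _) (le_antisymm ?_ ?_)
  · rintro _ ⟨_, ⟨v, rfl⟩, rfl⟩
    exact ⟨A *ᵥ v, (hcomm v).symm⟩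
  · rintro _ ⟨v, rfl⟩
    refine ⟨A ^ k *ᵥ (X *ᵥ v), ⟨X *ᵥ v, rfl⟩, ?_⟩
    change A *ᵥ (A ^ k *ᵥ (X *ᵥ v)) = A ^ k *ᵥ v
    rw [mulVec_mulVec, mulVec_mulVec, ← pow_succ', ← hX]

theorem matrix_pow_succ_mul_cancel (hX : A ^ k = A ^ (k + 1) * X) (U V : Matrix ι ι R)
    (h : A ^ (k + 1) * U = A ^ (k + 1) * V) : A ^ k * U = A ^ k * V := by
  refine ext_of_mulVec_single fun j => ?_
  have hcol : A *ᵥ (A ^ k *ᵥ (U *ᵥ Pi.single j 1)) = A *ᵥ (A ^ k *ᵥ (V *ᵥ Pi.single j 1)) := by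
    simp only [mulVec_mulVec, ← mul_assoc, ← pow_succ', h]
  simpa only [mulVec_mulVec] using
    injOn_mulVec_range_pow_mulVec hX (Set.mem_range_self _) (Set.mem_range_self _) hcol

theorem drazinInverse_eq_pow_mul_pow_general (hX : A ^ k = A ^ (k + 1) * X) :
    IsDrazinInverse k A (A ^ k * X ^ (k + 1)) :=
  .of_pow_succ_mul_cancel (matrix_pow_succ_mul_cancel hX) hX

end Matrix

/-- If `ind(A) = k` and `A^k = A^(k+1) X`, then `A^D = A^k X^(k+1)`. -/
theorem drazinInverse_eq_pow_mul_pow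
    {F ι : Type*} [Field F] [Fintype ι] [DecidableEq ι]
    (A X : Matrix ι ι F) (k : ℕ) (hk : drazinIndex A = k)
    (hX : A ^ k = A ^ (k + 1) * X) :
    A ^ (k + 1) * (A ^ k * X ^ (k + 1)) = A ^ k ∧
      (A ^ k * X ^ (k + 1)) * A * (A ^ k * X ^ (k + 1)) = A ^ k * X ^ (k + 1) ∧
      A * (A ^ k * X ^ (k + 1)) = (A ^ k * X ^ (k + 1)) * A := by
  have h := drazinInverse_eq_pow_mul_pow_general hX
  exact ⟨h.pow_succ_mul, h.mul_mul_self, h.commute⟩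
end

section
/- Let A and B be matrices over a field of sizes n×m and m×n respectively, so that AB is n×n and BA is m×m. Then the Drazin indices of AB and BA differ by at most one: |ind(AB) − ind(BA)| ≤ 1. -/
/-!
If `X` is a Drazin inverse of `A * B`, then Cline's formula `Y = B * X ^ 2 * A` gives a Drazin
inverse of `B * A`, and the power identity `(A * B) ^ (k + 1) * X = (A * B) ^ k` is transported to
`B * A` at the cost of one extra factor. Hence `ind (B * A) ≤ ind (A * B) + 1`, and the claim
follows by symmetry. The infimum defining the index is attained because a polynomial annihilating
`A` can be written `T ^ k * q` with `T` and `q` coprime; a Bézout identity `u * T + v * q = 1`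
then yields `A ^ (k + 1) * u(A) = A ^ k`, from which a Drazin inverse is built.
-/

/-- `x` is a Drazin inverse of `a`, and the index of `a` is at most `k`. The exponent is a
parameter, so that the Drazin index is the least `k` for which such an `x` exists. -/
structure IsDrazinInverse_s3 {M : Type*} [Monoid M] (k : ℕ) (a x : M) : Prop where
  pow_succ_mul : a ^ (k + 1) * x = a ^ k
  mul_mul_self : x * a * x = x
  commute : Commute a x

theorem IsDrazinInverse_s3.mul_sq_eq {M : Type*} [Monoid M] {k : ℕ} {a x : M}
    (hx : IsDrazinInverse_s3 k a x) : a * (x * x) = x := by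
  rw [← mul_assoc, hx.commute.eq, hx.mul_mul_self]

theorem IsDrazinInverse_s3.sq_mul_eq {M : Type*} [Monoid M] {k : ℕ} {a x : M}
    (hx : IsDrazinInverse_s3 k a x) : x * x * a = x := by
  rw [mul_assoc, ← hx.commute.eq, ← mul_assoc, hx.mul_mul_self]

section Existence

theorem pow_add_mul_pow_of_pow_succ_mul {M : Type*} [Monoid M] {k : ℕ} {a c : M}
    (h : a ^ (k + 1) * c = a ^ k) (j : ℕ) : a ^ (k + j) * c ^ j = a ^ k := by
  induction j with
  | zero => simp
  | succ j ih =>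
    calc a ^ (k + (j + 1)) * c ^ (j + 1)
        = a ^ j * (a ^ (k + 1) * c) * c ^ j := by
          rw [pow_succ' c, ← mul_assoc, ← mul_assoc, ← pow_add]
          congr 3
          omega
      _ = a ^ (k + j) * c ^ j := by rw [h, ← pow_add, add_comm]
      _ = a ^ k := ih

theorem IsDrazinInverse_s3.of_commute_of_pow_succ_mul {M : Type*} [Monoid M] {k : ℕ} {a c : M}
    (hac : Commute a c) (h : a ^ (k + 1) * c = a ^ k) :
    IsDrazinInverse_s3 k a (a ^ k * c ^ (k + 1)) := by
  have absorb : a ^ (k + 1) * (a ^ k * c ^ (k + 1)) = a ^ k := by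
    rw [← mul_assoc, ← pow_add, add_comm, pow_add_mul_pow_of_pow_succ_mul h]
  have comm : Commute a (a ^ k * c ^ (k + 1)) :=
    ((Commute.refl a).pow_right k).mul_right (hac.pow_right (k + 1))
  refine ⟨absorb, ?_, comm⟩
  calc a ^ k * c ^ (k + 1) * a * (a ^ k * c ^ (k + 1))
      = c ^ (k + 1) * (a ^ (k + 1) * (a ^ k * c ^ (k + 1))) := by
        rw [(hac.pow_pow k (k + 1)).eq, pow_succ a]
        simp only [mul_assoc]
    _ = a ^ k * c ^ (k + 1) := by rw [absorb, (hac.pow_pow k (k + 1)).eq]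

open Polynomial in
theorem exists_isDrazinInverse_of_isIntegral {F R : Type*} [Field F] [Ring R] [Algebra F R] {a : R}
    (ha : IsIntegral F a) : ∃ (k : ℕ) (x : R), IsDrazinInverse_s3 k a x := by
  obtain ⟨k, q, hXq, hp⟩ := WfDvdMonoid.max_power_factor (minpoly.ne_zero ha) irreducible_X
  obtain ⟨u, v, huv⟩ := irreducible_X.coprime_iff_not_dvd.mpr hXq
  have bezout : X ^ (k + 1) * u = X ^ k - v * minpoly F a := by
    rw [hp]
    linear_combination X ^ k * huv
  have pow_succ_mul : a ^ (k + 1) * aeval a u = a ^ k := by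
    simpa using congrArg (aeval a) bezout
  have comm : Commute a (aeval a u) := by
    simpa using (Commute.all X u).map (aeval a)
  exact ⟨k, _, .of_commute_of_pow_succ_mul comm pow_succ_mul⟩

end Existence

section Cline

variable {R ι κ : Type*} [Semiring R] [Fintype ι] [DecidableEq ι] [Fintype κ] [DecidableEq κ]

theorem matrix_mul_pow_mul_comm (A : Matrix ι κ R) (B : Matrix κ ι R) (k : ℕ) :
    (B * A) ^ k * B = B * (A * B) ^ k := by
  induction k with
  | zero => simp
  | succ k ih =>
    rw [pow_succ', Matrix.mul_assoc, ih, pow_succ']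
    simp only [Matrix.mul_assoc]

theorem IsDrazinInverse_s3.cline {A : Matrix ι κ R} {B : Matrix κ ι R} {X : Matrix ι ι R} {k : ℕ}
    (hX : IsDrazinInverse_s3 k (A * B) X) :
    IsDrazinInverse_s3 (k + 1) (B * A) (B * (X * X) * A) := by
  have mul_left : B * A * (B * (X * X) * A) = B * X * A := by
    calc B * A * (B * (X * X) * A) = B * (A * B * (X * X)) * A := by
          simp only [Matrix.mul_assoc]
      _ = B * X * A := by rw [hX.mul_sq_eq]
  have mul_right : B * (X * X) * A * (B * A) = B * X * A := by
    calc B * (X * X) * A * (B * A) = B * (X * X * (A * B)) * A := by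
          simp only [Matrix.mul_assoc]
      _ = B * X * A := by rw [hX.sq_mul_eq]
  refine ⟨?_, ?_, mul_left.trans mul_right.symm⟩
  · calc (B * A) ^ (k + 1 + 1) * (B * (X * X) * A)
        = (B * A) ^ (k + 1) * B * X * A := by
          rw [pow_succ, Matrix.mul_assoc, mul_left]
          simp only [Matrix.mul_assoc]
      _ = B * ((A * B) ^ (k + 1) * X) * A := by
          rw [matrix_mul_pow_mul_comm, Matrix.mul_assoc B]
      _ = (B * A) ^ k * B * A := by rw [hX.pow_succ_mul, matrix_mul_pow_mul_comm]
      _ = (B * A) ^ (k + 1) := by rw [Matrix.mul_assoc, ← pow_succ]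
  · calc B * (X * X) * A * (B * A) * (B * (X * X) * A)
        = B * X * (A * B * (X * X)) * A := by
          rw [mul_right]
          simp only [Matrix.mul_assoc]
      _ = B * (X * X) * A := by rw [hX.mul_sq_eq, Matrix.mul_assoc B]

end Cline

section Index

variable {F ι κ : Type*} [Field F] [Fintype ι] [DecidableEq ι] [Fintype κ] [DecidableEq κ]

theorem drazinIndex_eq_sInf (A : Matrix ι ι F) :
    drazinIndex A = sInf {k | ∃ X, IsDrazinInverse_s3 k A X} := by
  have isDrazinInverse_iff (k : ℕ) (X : Matrix ι ι F) : IsDrazinInverse_s3 k A X ↔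
      A ^ (k + 1) * X = A ^ k ∧ X * A * X = X ∧ A * X = X * A :=
    ⟨fun ⟨h₁, h₂, h₃⟩ => ⟨h₁, h₂, h₃⟩, fun ⟨h₁, h₂, h₃⟩ => ⟨h₁, h₂, h₃⟩⟩
  simp only [drazinIndex, isDrazinInverse_iff]

theorem IsDrazinInverse_s3.drazinIndex_le {A X : Matrix ι ι F} {k : ℕ} (hX : IsDrazinInverse_s3 k A X) :
    drazinIndex A ≤ k := by
  rw [drazinIndex_eq_sInf]
  exact Nat.sInf_le ⟨X, hX⟩

theorem exists_isDrazinInverse_drazinIndex (A : Matrix ι ι F) :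
    ∃ X, IsDrazinInverse_s3 (drazinIndex A) A X := by
  rw [drazinIndex_eq_sInf]
  exact Nat.sInf_mem <|
    exists_isDrazinInverse_of_isIntegral (Algebra.IsIntegral.isIntegral (R := F) A)

theorem drazinIndex_mul_comm_le_add_one (A : Matrix ι κ F) (B : Matrix κ ι F) :
    drazinIndex (B * A) ≤ drazinIndex (A * B) + 1 := by
  obtain ⟨X, hX⟩ := exists_isDrazinInverse_drazinIndex (A * B)
  exact hX.cline.drazinIndex_le

theorem abs_drazinIndex_mul_sub_le_one_general (A : Matrix ι κ F) (B : Matrix κ ι F) :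
    |(drazinIndex (A * B) : ℤ) - (drazinIndex (B * A) : ℤ)| ≤ 1 := by
  have hBA := drazinIndex_mul_comm_le_add_one A B
  have hAB := drazinIndex_mul_comm_le_add_one B A
  rw [abs_le]
  omega

end Index

/-- The Drazin indices of `AB` and `BA` differ by at most one. -/
theorem abs_drazinIndex_mul_sub_le_one
    {F : Type*} [Field F] {m n : ℕ}
    (A : Matrix (Fin n) (Fin m) F) (B : Matrix (Fin m) (Fin n) F) :
    |(drazinIndex (A * B) : ℤ) - (drazinIndex (B * A) : ℤ)| ≤ 1 :=
  abs_drazinIndex_mul_sub_le_one_general A B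
end

section
/- Let M be the double star matrix built from a, b, x, y, z, w, and assume x^⊤y ≠ 0, z^⊤w = 0, and ζ := x^⊤y + ab ≠ 0. Then the Drazin inverse of M is N = ζ^{-1} · [[0, x^⊤, a, 0], [y, 0, 0, ζ^{-1} a y z^⊤], [b, 0, 0, ζ^{-1} a b z^⊤], [0, ζ^{-1} b w x^⊤, ζ^{-1} a b w, 0]] (same block structure as M); that is, N satisfies M^4 N = M^3, NMN = N, and MN = NM. -/
/-- The double star matrix of order `m + n + 2`, in block form (blocks of sizes 1, m, 1, n):
`M = [[0, xᵀ, a, 0], [y, 0, 0, 0], [b, 0, 0, zᵀ], [0, 0, w, 0]]`. -/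
def doubleStar {F : Type*} [Field F] {m n : ℕ} (a b : F)
    (x y : Fin m → F) (z w : Fin n → F) :
    Matrix (Fin 1 ⊕ Fin m ⊕ Fin 1 ⊕ Fin n) (Fin 1 ⊕ Fin m ⊕ Fin 1 ⊕ Fin n) F :=
  Matrix.of fun i j =>
    match i, j with
    | Sum.inl _, Sum.inr (Sum.inl j) => x j
    | Sum.inl _, Sum.inr (Sum.inr (Sum.inl _)) => a
    | Sum.inr (Sum.inl i), Sum.inl _ => y i
    | Sum.inr (Sum.inr (Sum.inl _)), Sum.inl _ => b
    | Sum.inr (Sum.inr (Sum.inl _)), Sum.inr (Sum.inr (Sum.inr j)) => z j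
    | Sum.inr (Sum.inr (Sum.inr i)), Sum.inr (Sum.inr (Sum.inl _)) => w i
    | _, _ => 0

/-- The matrix `[[0, xᵀ, a, 0], [y, 0, 0, ζ⁻¹ a y zᵀ], [b, 0, 0, ζ⁻¹ a b zᵀ],
[0, ζ⁻¹ b w xᵀ, ζ⁻¹ a b w, 0]]` (blocks of sizes 1, m, 1, n). -/
def doubleStarDrazinCore' {F : Type*} [Field F] {m n : ℕ} (a b ζ : F)
    (x y : Fin m → F) (z w : Fin n → F) :
    Matrix (Fin 1 ⊕ Fin m ⊕ Fin 1 ⊕ Fin n) (Fin 1 ⊕ Fin m ⊕ Fin 1 ⊕ Fin n) F :=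
  Matrix.of fun i j =>
    match i, j with
    | Sum.inl _, Sum.inr (Sum.inl j) => x j
    | Sum.inl _, Sum.inr (Sum.inr (Sum.inl _)) => a
    | Sum.inr (Sum.inl i), Sum.inl _ => y i
    | Sum.inr (Sum.inl i), Sum.inr (Sum.inr (Sum.inr j)) => ζ⁻¹ * a * y i * z j
    | Sum.inr (Sum.inr (Sum.inl _)), Sum.inl _ => b
    | Sum.inr (Sum.inr (Sum.inl _)), Sum.inr (Sum.inr (Sum.inr j)) => ζ⁻¹ * a * b * z j
    | Sum.inr (Sum.inr (Sum.inr i)), Sum.inr (Sum.inl j) => ζ⁻¹ * b * w i * x j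
    | Sum.inr (Sum.inr (Sum.inr i)), Sum.inr (Sum.inr (Sum.inl _)) => ζ⁻¹ * a * b * w i
    | _, _ => 0

/-!
Two applications of `M` bring every vector to the form `(σ, τ y, τ b, κ w)`. Because `zᵀw = 0`, `M`
sends such a vector to `(ζ τ, σ y, σ b, τ b w)`, so on the range of `M³`, where `κ = ζ⁻¹ b σ`, `M²`
is multiplication by `ζ`. Hence `M⁵ = ζ M³`, which makes `ζ⁻² M³` the Drazin inverse of `M`.
-/

open scoped Matrix

/-- `x` is a Drazin inverse of `a`, with `k` an upper bound for the index of `a`; the index itself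
is the smallest `k` for which such an `x` exists. -/
structure IsDrazinInverse_s8 {A : Type*} [Monoid A] (k : ℕ) (a x : A) : Prop where
  pow_succ_mul : a ^ (k + 1) * x = a ^ k
  mul_mul_self : x * a * x = x
  comm : a * x = x * a

section Monoid

variable {R A : Type*} [CommMonoid R] [Monoid A] [MulAction R A] {r s : R} {a : A} {k d : ℕ}

theorem pow_add_mul_eq_smul_pow [IsScalarTower R A A] (h : a ^ (k + d) = r • a ^ k) {l : ℕ}
    (hkl : k ≤ l) (j : ℕ) : a ^ (l + d * j) = r ^ j • a ^ l := by
  obtain ⟨i, rfl⟩ := Nat.exists_eq_add_of_le hkl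
  induction j with
  | zero => simp
  | succ j ih =>
    calc a ^ (k + i + d * (j + 1))
        = a ^ (k + d) * a ^ (i + d * j) := by rw [← pow_add]; congr 1; ring
      _ = r • a ^ (k + i + d * j) := by rw [h, smul_mul_assoc, ← pow_add, add_assoc]
      _ = r ^ (j + 1) • a ^ (k + i) := by rw [ih, smul_smul, pow_succ']

theorem isDrazinInverse_smul_pow [IsScalarTower R A A] [SMulCommClass R A A]
    (h : a ^ (k + d) = r • a ^ k) (hsr : s * r = 1) {j l : ℕ} (hkl : k ≤ l)
    (hl : l + 1 = d * j) : IsDrazinInverse_s8 k a (s ^ j • a ^ l) where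
  pow_succ_mul := by
    rw [mul_smul_comm, ← pow_add, add_assoc, add_comm 1, hl, pow_add_mul_eq_smul_pow h le_rfl,
      smul_smul, ← mul_pow, hsr, one_pow, one_smul]
  mul_mul_self := by
    have hpow : a ^ l * a * a ^ l = r ^ j • a ^ l := by
      rw [← pow_succ, ← pow_add, hl, add_comm, pow_add_mul_eq_smul_pow h hkl]
    rw [smul_mul_assoc, smul_mul_assoc, mul_smul_comm, hpow, smul_smul (s ^ j) (r ^ j), ← mul_pow,
      hsr, one_pow, one_smul]
  comm := by rw [mul_smul_comm, smul_mul_assoc, ← pow_succ', pow_succ]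

end Monoid

/-- The column vector with blocks `α`, `u`, `β`, `v` of sizes `1`, `m`, `1`, `n`, partitioned like
the rows and columns of `doubleStar`. -/
def blockVec {R : Type*} {m n : ℕ} (α : R) (u : Fin m → R) (β : R) (v : Fin n → R) :
    Fin 1 ⊕ Fin m ⊕ Fin 1 ⊕ Fin n → R :=
  Sum.elim (fun _ => α) (Sum.elim u (Sum.elim (fun _ => β) v))

section BlockVec

variable {R : Type*} {m n : ℕ}

theorem smul_blockVec [Mul R] (c α : R) (u : Fin m → R) (β : R) (v : Fin n → R) :
    c • blockVec α u β v = blockVec (c * α) (c • u) (c * β) (c • v) := by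
  ext (_ | _ | _ | _) <;> rfl

theorem exists_eq_blockVec (p : Fin 1 ⊕ Fin m ⊕ Fin 1 ⊕ Fin n → R) :
    ∃ α u β v, p = blockVec α u β v := by
  refine ⟨p (.inl 0), fun i => p (.inr (.inl i)), p (.inr (.inr (.inl 0))),
    fun i => p (.inr (.inr (.inr i))), ?_⟩
  ext (i | _ | i | _) <;> simp [blockVec, Fin.fin_one_eq_zero]

theorem matrix_ext_of_mulVec_blockVec [NonAssocSemiring R] {ι : Type*}
    {A B : Matrix ι (Fin 1 ⊕ Fin m ⊕ Fin 1 ⊕ Fin n) R}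
    (h : ∀ α u β v, A *ᵥ blockVec α u β v = B *ᵥ blockVec α u β v) : A = B := by
  refine Matrix.ext_iff_mulVec.mpr fun p => ?_
  obtain ⟨α, u, β, v, rfl⟩ := exists_eq_blockVec p
  exact h α u β v

end BlockVec

section DoubleStar

variable {F : Type*} [Field F] {m n : ℕ} {a b ζ : F} {x y : Fin m → F} {z w : Fin n → F}

theorem doubleStar_mulVec_blockVec (α : F) (u : Fin m → F) (β : F) (v : Fin n → F) :
    doubleStar a b x y z w *ᵥ blockVec α u β v =
      blockVec (x ⬝ᵥ u + a * β) (α • y) (α * b + z ⬝ᵥ v) (β • w) := by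
  ext (_ | _ | _ | _) <;>
    simp [Matrix.mulVec, dotProduct, doubleStar, blockVec, mul_comm]

theorem doubleStarDrazinCore'_mulVec_blockVec (α : F) (u : Fin m → F) (β : F) (v : Fin n → F) :
    doubleStarDrazinCore' a b ζ x y z w *ᵥ blockVec α u β v =
      blockVec (x ⬝ᵥ u + a * β) ((α + ζ⁻¹ * a * (z ⬝ᵥ v)) • y) ((α + ζ⁻¹ * a * (z ⬝ᵥ v)) * b)
        ((ζ⁻¹ * b * (x ⬝ᵥ u + a * β)) • w) := by
  ext (_ | _ | _ | _) <;>
    simp only [Matrix.mulVec, dotProduct, doubleStarDrazinCore', Matrix.of_apply, blockVec,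
      Fintype.sum_sum_type, Finset.univ_unique, Sum.elim_inl, Sum.elim_inr, Pi.smul_apply,
      smul_eq_mul, Finset.sum_singleton, Finset.sum_const_zero, zero_mul, zero_add, add_zero,
      Finset.mul_sum, Finset.sum_mul, mul_add, add_mul] <;>
    ring_nf

theorem doubleStar_mulVec_blockVec_smul (hzw : z ⬝ᵥ w = 0) (hζdef : ζ = x ⬝ᵥ y + a * b)
    (σ τ κ : F) :
    doubleStar a b x y z w *ᵥ blockVec σ (τ • y) (τ * b) (κ • w) =
      blockVec (ζ * τ) (σ • y) (σ * b) ((τ * b) • w) := by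
  rw [doubleStar_mulVec_blockVec, dotProduct_smul, dotProduct_smul, hzw, smul_zero, add_zero,
    smul_eq_mul]
  congr 1
  rw [hζdef]
  ring

theorem doubleStar_sq_mulVec_blockVec (hzw : z ⬝ᵥ w = 0) (hζdef : ζ = x ⬝ᵥ y + a * b)
    (α : F) (u : Fin m → F) (β : F) (v : Fin n → F) :
    doubleStar a b x y z w ^ 2 *ᵥ blockVec α u β v =
      blockVec (ζ * α + a * (z ⬝ᵥ v)) ((x ⬝ᵥ u + a * β) • y) ((x ⬝ᵥ u + a * β) * b)
        ((α * b + z ⬝ᵥ v) • w) := by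
  rw [pow_two, ← Matrix.mulVec_mulVec, doubleStar_mulVec_blockVec, doubleStar_mulVec_blockVec,
    dotProduct_smul, dotProduct_smul, hzw, smul_zero, add_zero, smul_eq_mul]
  congr 1
  rw [hζdef]
  ring

theorem doubleStar_pow_three_mulVec_blockVec (hzw : z ⬝ᵥ w = 0) (hζdef : ζ = x ⬝ᵥ y + a * b)
    (α : F) (u : Fin m → F) (β : F) (v : Fin n → F) :
    doubleStar a b x y z w ^ 3 *ᵥ blockVec α u β v =
      blockVec (ζ * (x ⬝ᵥ u + a * β)) ((ζ * α + a * (z ⬝ᵥ v)) • y) ((ζ * α + a * (z ⬝ᵥ v)) * b)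
        (((x ⬝ᵥ u + a * β) * b) • w) := by
  rw [pow_succ', ← Matrix.mulVec_mulVec, doubleStar_sq_mulVec_blockVec hzw hζdef,
    doubleStar_mulVec_blockVec_smul hzw hζdef]

theorem doubleStar_pow_three (hzw : z ⬝ᵥ w = 0) (hζdef : ζ = x ⬝ᵥ y + a * b) (hζ : ζ ≠ 0) :
    doubleStar a b x y z w ^ 3 = ζ • doubleStarDrazinCore' a b ζ x y z w := by
  refine matrix_ext_of_mulVec_blockVec fun α u β v => ?_
  rw [doubleStar_pow_three_mulVec_blockVec hzw hζdef, Matrix.smul_mulVec,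
    doubleStarDrazinCore'_mulVec_blockVec, smul_blockVec, smul_smul, smul_smul]
  have hs : ζ * (α + ζ⁻¹ * a * (z ⬝ᵥ v)) = ζ * α + a * (z ⬝ᵥ v) := by field_simp
  have ht : ζ * (ζ⁻¹ * b * (x ⬝ᵥ u + a * β)) = (x ⬝ᵥ u + a * β) * b := by field_simp
  rw [← mul_assoc ζ _ b, hs, ht]

theorem doubleStar_pow_five (hzw : z ⬝ᵥ w = 0) (hζdef : ζ = x ⬝ᵥ y + a * b) :
    doubleStar a b x y z w ^ 5 = ζ • doubleStar a b x y z w ^ 3 := by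
  refine matrix_ext_of_mulVec_blockVec fun α u β v => ?_
  rw [pow_add _ 2 3, ← Matrix.mulVec_mulVec, Matrix.smul_mulVec,
    doubleStar_pow_three_mulVec_blockVec hzw hζdef, pow_two, ← Matrix.mulVec_mulVec,
    doubleStar_mulVec_blockVec_smul hzw hζdef, doubleStar_mulVec_blockVec_smul hzw hζdef,
    smul_blockVec, smul_smul, smul_smul, mul_assoc, mul_assoc]

theorem doubleStar_drazinInverse_of_ne_zero_general (hzw : z ⬝ᵥ w = 0)
    (hζdef : ζ = x ⬝ᵥ y + a * b) (hζ : ζ ≠ 0) :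
    IsDrazinInverse_s8 3 (doubleStar a b x y z w) (ζ⁻¹ • doubleStarDrazinCore' a b ζ x y z w) := by
  have hN : ζ⁻¹ • doubleStarDrazinCore' a b ζ x y z w =
      ζ⁻¹ ^ 2 • doubleStar a b x y z w ^ 3 := by
    rw [doubleStar_pow_three hzw hζdef hζ, pow_two, mul_smul, inv_smul_smul₀ hζ]
  rw [hN]
  exact isDrazinInverse_smul_pow (d := 2) (j := 2) (doubleStar_pow_five hzw hζdef)
    (inv_mul_cancel₀ hζ) le_rfl rfl

end DoubleStar

/-- In the case `xᵀy ≠ 0`, `zᵀw = 0`, `ζ = xᵀy + ab ≠ 0`, the Drazin inverse of the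
double star matrix `M` is `N = ζ⁻¹ • doubleStarDrazinCore' a b ζ x y z w`; since
`ind(M) = 3`, `N` is characterized by `M^4 N = M^3`, `NMN = N`, `MN = NM`. -/
theorem doubleStar_drazinInverse_of_ne_zero
    {F : Type*} [Field F] {m n : ℕ} (a b : F) (ha : a ≠ 0) (hb : b ≠ 0)
    (x y : Fin m → F) (z w : Fin n → F)
    (hx : ∀ i, x i ≠ 0) (hy : ∀ i, y i ≠ 0) (hz : ∀ i, z i ≠ 0) (hw : ∀ i, w i ≠ 0)
    (hxy : (∑ i, x i * y i) ≠ 0) (hzw : (∑ i, z i * w i) = 0)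
    (ζ : F) (hζdef : ζ = (∑ i, x i * y i) + a * b) (hζ : ζ ≠ 0) :
    (doubleStar a b x y z w) ^ 4 * (ζ⁻¹ • doubleStarDrazinCore' a b ζ x y z w)
        = (doubleStar a b x y z w) ^ 3 ∧
      (ζ⁻¹ • doubleStarDrazinCore' a b ζ x y z w) * (doubleStar a b x y z w) *
          (ζ⁻¹ • doubleStarDrazinCore' a b ζ x y z w)
        = ζ⁻¹ • doubleStarDrazinCore' a b ζ x y z w ∧
      (doubleStar a b x y z w) * (ζ⁻¹ • doubleStarDrazinCore' a b ζ x y z w)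
        = (ζ⁻¹ • doubleStarDrazinCore' a b ζ x y z w) * (doubleStar a b x y z w) :=
  have h := doubleStar_drazinInverse_of_ne_zero_general hzw hζdef hζ
  ⟨h.pow_succ_mul, h.mul_mul_self, h.comm⟩
end

section
/- Let M be the D-linked stars matrix built from A and the vectors x_i, y_i, and assume x_i^⊤ y_i ≠ 0 for all i (so that BC is invertible). Then the group inverse of M is N = [[0, (BC)^{-1}B], [C(BC)^{-1}, −C(BC)^{-1}A(BC)^{-1}B]]; that is, N satisfies MNM = M, NMN = N, and MN = NM. -/
/-!
An element `b` is the group inverse of `a` as soon as `a * b` and `b * a` are the same element `e`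
and `e` acts as a left identity on both `a` and `b`. If `D` is the inverse of `B * C`, then `C * D`
is a right inverse of `B`, `D * B` is a left inverse of `C`, and the idempotent `e` of
`[[A, B], [C, 0]]` is `[[1, 0], [0, C * D * B]]`; the lower right block of the group inverse is
what makes the off-diagonal blocks of `e` vanish. For linked stars, `B * C` is diagonal with entries
`xᵢᵀyᵢ`, hence invertible.
-/

open Matrix

/-- The block-diagonal matrix `B = diag(x₁ᵀ, …, xₙᵀ)`. -/
def dlinkedB {F : Type*} [Field F] {n : ℕ} {r : Fin n → ℕ}
    (x : ∀ i, Fin (r i) → F) : Matrix (Fin n) ((i : Fin n) × Fin (r i)) F :=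
  Matrix.of fun i p => if i = p.1 then x p.1 p.2 else 0

/-- The block-diagonal matrix `C = diag(y₁, …, yₙ)`. -/
def dlinkedC {F : Type*} [Field F] {n : ℕ} {r : Fin n → ℕ}
    (y : ∀ i, Fin (r i) → F) : Matrix ((i : Fin n) × Fin (r i)) (Fin n) F :=
  Matrix.of fun p j => if p.1 = j then y p.1 p.2 else 0

/-- The D-linked stars matrix `M = [[A, B], [C, 0]]`. -/
def dlinkedStars {F : Type*} [Field F] {n : ℕ} {r : Fin n → ℕ}
    (A : Matrix (Fin n) (Fin n) F) (x y : ∀ i, Fin (r i) → F) :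
    Matrix (Fin n ⊕ (i : Fin n) × Fin (r i)) (Fin n ⊕ (i : Fin n) × Fin (r i)) F :=
  Matrix.fromBlocks A (dlinkedB x) (dlinkedC y) 0

/-- `b` is a group inverse of `a`: a commuting reflexive generalized inverse. Stated as a relation
on an arbitrary multiplication, so that it covers square matrices over any ring. -/
structure IsGroupInverse {S : Type*} [Mul S] (a b : S) : Prop where
  mul_mul_eq_left : a * b * a = a
  mul_mul_eq_right : b * a * b = b
  commute : Commute a b

theorem IsGroupInverse.of_mul_eq {S : Type*} [Mul S] {a b e : S} (hab : a * b = e)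
    (hba : b * a = e) (ha : e * a = a) (hb : e * b = b) : IsGroupInverse a b where
  mul_mul_eq_left := by rw [hab, ha]
  mul_mul_eq_right := by rw [hba, hb]
  commute := hab.trans hba.symm

section BlockMatrix

variable {R m k : Type*} [Ring R] [Fintype m] [DecidableEq m] [Fintype k]
  (A : Matrix m m R) {B : Matrix m k R} {C : Matrix k m R} {D : Matrix m m R}

theorem fromBlocks_zero₂₂_mul_of_mul_eq_one (h : B * C * D = 1) :
    fromBlocks A B C 0 * fromBlocks 0 (D * B) (C * D) (-(C * D * A * D * B)) =
      fromBlocks 1 0 0 (C * D * B) := by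
  have cancel : B * (C * D * A * D * B) = A * D * B := by
    simp only [← Matrix.mul_assoc, h, Matrix.one_mul]
  simp [fromBlocks_multiply, cancel, ← Matrix.mul_assoc, h]

theorem mul_fromBlocks_zero₂₂_of_mul_eq_one (h : D * (B * C) = 1) :
    fromBlocks 0 (D * B) (C * D) (-(C * D * A * D * B)) * fromBlocks A B C 0 =
      fromBlocks 1 0 0 (C * D * B) := by
  simp [fromBlocks_multiply, Matrix.mul_assoc, h]

theorem isGroupInverse_fromBlocks_zero₂₂ (hBCD : B * C * D = 1) (hDBC : D * (B * C) = 1) :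
    IsGroupInverse (fromBlocks A B C 0)
      (fromBlocks 0 (D * B) (C * D) (-(C * D * A * D * B))) := by
  have hC : C * D * B * C = C := by
    rw [Matrix.mul_assoc, Matrix.mul_assoc, hDBC, Matrix.mul_one]
  refine .of_mul_eq (fromBlocks_zero₂₂_mul_of_mul_eq_one A hBCD)
    (mul_fromBlocks_zero₂₂_of_mul_eq_one A hDBC) ?_ ?_ <;>
    simp [fromBlocks_multiply, ← Matrix.mul_assoc, hC]

end BlockMatrix

section DLinkedStars

variable {F : Type*} [Field F] {n : ℕ} {r : Fin n → ℕ}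

theorem dlinkedB_mul_dlinkedC (x y : ∀ i, Fin (r i) → F) :
    dlinkedB x * dlinkedC y = diagonal fun i => x i ⬝ᵥ y i := by
  ext i j
  obtain rfl | hij := eq_or_ne i j
  · simp [dlinkedB, dlinkedC, mul_apply, dotProduct, Fintype.sum_sigma]
  · simp [dlinkedB, dlinkedC, mul_apply, Fintype.sum_sigma, hij]

theorem isUnit_dlinkedB_mul_dlinkedC_iff {x y : ∀ i, Fin (r i) → F} :
    IsUnit (dlinkedB x * dlinkedC y) ↔ ∀ i, x i ⬝ᵥ y i ≠ 0 := by
  simp only [dlinkedB_mul_dlinkedC, isUnit_diagonal, Pi.isUnit_iff, isUnit_iff_ne_zero]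

theorem dlinkedStars_groupInverse_general (A : Matrix (Fin n) (Fin n) F)
    (x y : ∀ i, Fin (r i) → F) (hxy : ∀ i, x i ⬝ᵥ y i ≠ 0) :
    letI B := dlinkedB x
    letI C := dlinkedC y
    IsGroupInverse (dlinkedStars A x y)
      (fromBlocks 0 ((B * C)⁻¹ * B) (C * (B * C)⁻¹) (-(C * (B * C)⁻¹ * A * (B * C)⁻¹ * B))) := by
  have hdet : IsUnit (dlinkedB x * dlinkedC y).det :=
    (isUnit_iff_isUnit_det _).mp (isUnit_dlinkedB_mul_dlinkedC_iff.mpr hxy)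
  exact isGroupInverse_fromBlocks_zero₂₂ A (mul_nonsing_inv _ hdet) (nonsing_inv_mul _ hdet)

end DLinkedStars

/-- When `xᵢᵀyᵢ ≠ 0` for every `i`, the group inverse of the D-linked stars matrix is
`N = [[0, (BC)⁻¹B], [C(BC)⁻¹, -C(BC)⁻¹A(BC)⁻¹B]]`. -/
theorem dlinkedStars_groupInverse
    {F : Type*} [Field F] {n : ℕ} {r : Fin n → ℕ}
    (A : Matrix (Fin n) (Fin n) F) (x y : ∀ i, Fin (r i) → F)
    (hx : ∀ i k, x i k ≠ 0) (hy : ∀ i k, y i k ≠ 0)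
    (hxy : ∀ i, (∑ k, x i k * y i k) ≠ 0) :
    letI B := dlinkedB x
    letI C := dlinkedC y
    letI M := dlinkedStars A x y
    letI N := Matrix.fromBlocks 0 ((B * C)⁻¹ * B) (C * (B * C)⁻¹)
      (-(C * (B * C)⁻¹ * A * (B * C)⁻¹ * B))
    M * N * M = M ∧ N * M * N = N ∧ M * N = N * M := by
  obtain ⟨hMNM, hNMN, hcomm⟩ := dlinkedStars_groupInverse_general A x y hxy
  exact ⟨hMNM, hNMN, hcomm.eq⟩
end

section
/- Let M be the D-linked stars matrix built from A and the vectors x_i, y_i over a field 𝔽 with involution, and assume x_i* x_i ≠ 0 and y_i y_i* ≠ 0 for all i (so that BB* and C*C are invertible). Then the Moore–Penrose inverse of M is N = [[0, (C*C)^{-1}C*], [B*(BB*)^{-1}, −B*(BB*)^{-1} A (C*C)^{-1}C*]]; that is, N satisfies MNM = M, NMN = N, (MN)* = MN, and (NM)* = NM. -/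
open Matrix

/-! If `P = B†` and `Q = C†`, where the columns of `A` lie in the column space of `B` and the rows
of `A` in the row space of `C`, then the lower right block `-P A Q` cancels the off-diagonal parts
of both products of `[[A, B], [C, 0]]` and `[[0, Q], [P, -P A Q]]`, leaving `diag(B P, C Q)` and
`diag(Q C, P B)`. The Penrose equations are thus inherited from those of `B` and `C`. For linked
stars the two conditions on `A` are automatic: `B B*` and `C* C` are diagonal with nonzero entries,
so `P` is a right inverse of `B` and `Q` a left inverse of `C`. -/

/-- `N` is the Moore–Penrose inverse `M†` of `M`: the four Penrose equations hold. -/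
structure IsMoorePenroseInverse {R m n : Type*} [NonUnitalSemiring R] [StarRing R]
    [Fintype m] [Fintype n] (M : Matrix m n R) (N : Matrix n m R) : Prop where
  mul_mul_left : M * N * M = M
  mul_mul_right : N * M * N = N
  isHermitian_mul : (M * N).IsHermitian
  isHermitian_mul_swap : (N * M).IsHermitian

namespace IsMoorePenroseInverse

variable {R m n k l : Type*} [Fintype m] [Fintype n] [Fintype k] [Fintype l]

theorem symm [NonUnitalSemiring R] [StarRing R] {M : Matrix m n R} {N : Matrix n m R}
    (h : IsMoorePenroseInverse M N) : IsMoorePenroseInverse N M :=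
  ⟨h.mul_mul_right, h.mul_mul_left, h.isHermitian_mul_swap, h.isHermitian_mul⟩

theorem of_mul_eq_one [Semiring R] [StarRing R] [DecidableEq m]
    {M : Matrix m n R} {N : Matrix n m R} (hMN : M * N = 1) (hNM : (N * M).IsHermitian) :
    IsMoorePenroseInverse M N where
  mul_mul_left := by rw [hMN, Matrix.one_mul]
  mul_mul_right := by rw [Matrix.mul_assoc, hMN, Matrix.mul_one]
  isHermitian_mul := hMN ▸ isHermitian_one
  isHermitian_mul_swap := hNM

/-- The conditions `B * P * A = A` and `A * Q * C = A` say that the columns of `A` lie in the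
column space of `B` and its rows in the row space of `C`. -/
theorem fromBlocks_zero₂₂ [NonUnitalRing R] [StarRing R] {A : Matrix m n R} {B : Matrix m k R}
    {C : Matrix l n R} {P : Matrix k m R} {Q : Matrix n l R}
    (hB : IsMoorePenroseInverse B P) (hC : IsMoorePenroseInverse C Q)
    (hBA : B * P * A = A) (hAC : A * Q * C = A) :
    IsMoorePenroseInverse (fromBlocks A B C 0) (fromBlocks 0 Q P (-(P * A * Q))) := by
  have hMN : fromBlocks A B C 0 * fromBlocks 0 Q P (-(P * A * Q)) =
      fromBlocks (B * P) 0 0 (C * Q) := by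
    simp [fromBlocks_multiply, ← Matrix.mul_assoc, hBA]
  have hNM : fromBlocks 0 Q P (-(P * A * Q)) * fromBlocks A B C 0 =
      fromBlocks (Q * C) 0 0 (P * B) := by
    rw [Matrix.mul_assoc] at hAC
    simp [fromBlocks_multiply, Matrix.mul_assoc, hAC]
  constructor
  · simp [hMN, fromBlocks_multiply, hBA, hB.mul_mul_left, hC.mul_mul_left]
  · simp [hNM, fromBlocks_multiply, ← Matrix.mul_assoc, hB.mul_mul_right, hC.mul_mul_right]
  · exact hMN ▸ hB.isHermitian_mul.fromBlocks (by simp) hC.isHermitian_mul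
  · exact hNM ▸ hC.isHermitian_mul_swap.fromBlocks (by simp) hB.isHermitian_mul_swap

end IsMoorePenroseInverse

section FullRank

variable {R m n k l : Type*} [CommRing R] [StarRing R] [Fintype m] [Fintype n] [Fintype k]
  [Fintype l] [DecidableEq m] [DecidableEq n]

theorem mul_conjTranspose_mul_inv {B : Matrix m k R} (hB : IsUnit (B * Bᴴ)) :
    B * (Bᴴ * (B * Bᴴ)⁻¹) = 1 := by
  rw [← Matrix.mul_assoc, mul_nonsing_inv _ ((isUnit_iff_isUnit_det _).1 hB)]

theorem inv_mul_conjTranspose_mul {C : Matrix l n R} (hC : IsUnit (Cᴴ * C)) :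
    (Cᴴ * C)⁻¹ * Cᴴ * C = 1 := by
  rw [Matrix.mul_assoc, nonsing_inv_mul _ ((isUnit_iff_isUnit_det _).1 hC)]

theorem isMoorePenroseInverse_conjTranspose_mul_inv {B : Matrix m k R} (hB : IsUnit (B * Bᴴ)) :
    IsMoorePenroseInverse B (Bᴴ * (B * Bᴴ)⁻¹) :=
  .of_mul_eq_one (mul_conjTranspose_mul_inv hB) <|
    isHermitian_conjTranspose_mul_mul B (isHermitian_mul_conjTranspose_self B).inv

theorem isMoorePenroseInverse_inv_mul_conjTranspose {C : Matrix l n R} (hC : IsUnit (Cᴴ * C)) :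
    IsMoorePenroseInverse C ((Cᴴ * C)⁻¹ * Cᴴ) :=
  .symm <| .of_mul_eq_one (inv_mul_conjTranspose_mul hC) <| by
    simpa only [Matrix.mul_assoc] using
      isHermitian_mul_mul_conjTranspose C (isHermitian_conjTranspose_mul_self C).inv

theorem isMoorePenroseInverse_fromBlocks_of_isUnit (A : Matrix m n R) {B : Matrix m k R}
    {C : Matrix l n R} (hB : IsUnit (B * Bᴴ)) (hC : IsUnit (Cᴴ * C)) :
    IsMoorePenroseInverse (fromBlocks A B C 0)
      (fromBlocks 0 ((Cᴴ * C)⁻¹ * Cᴴ) (Bᴴ * (B * Bᴴ)⁻¹)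
        (-(Bᴴ * (B * Bᴴ)⁻¹ * A * (Cᴴ * C)⁻¹ * Cᴴ))) := by
  rw [Matrix.mul_assoc _ (Cᴴ * C)⁻¹]
  refine (isMoorePenroseInverse_conjTranspose_mul_inv hB).fromBlocks_zero₂₂
    (isMoorePenroseInverse_inv_mul_conjTranspose hC) ?_ ?_
  · rw [mul_conjTranspose_mul_inv hB, Matrix.one_mul]
  · rw [Matrix.mul_assoc, inv_mul_conjTranspose_mul hC, Matrix.mul_one]

end FullRank

section DLinked

variable {F : Type*} [Field F] {n : ℕ} {r : Fin n → ℕ}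

theorem dlinkedC_eq_transpose_dlinkedB (y : ∀ i, Fin (r i) → F) :
    dlinkedC y = (dlinkedB y)ᵀ := by
  ext p j
  simp only [dlinkedC, dlinkedB, of_apply, transpose_apply, eq_comm]

variable [StarRing F]

theorem dlinkedB_mul_conjTranspose (x : ∀ i, Fin (r i) → F) :
    dlinkedB x * (dlinkedB x)ᴴ = diagonal fun i => ∑ k, x i k * star (x i k) := by
  ext i j
  rw [diagonal_apply, mul_apply, Fintype.sum_sigma]
  split_ifs with hij
  · subst hij
    simp [dlinkedB]
  · simp [dlinkedB, Ne.symm hij]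

theorem conjTranspose_dlinkedC_mul (y : ∀ i, Fin (r i) → F) :
    (dlinkedC y)ᴴ * dlinkedC y = diagonal fun i => ∑ k, y i k * star (y i k) := by
  have h := congrArg transpose (dlinkedB_mul_conjTranspose y)
  rwa [transpose_mul, diagonal_transpose,
    ← conjTranspose_transpose_eq_transpose_conjTranspose, ← dlinkedC_eq_transpose_dlinkedB] at h

theorem isUnit_dlinkedB_mul_conjTranspose {x : ∀ i, Fin (r i) → F}
    (hx : ∀ i, ∑ k, star (x i k) * x i k ≠ 0) : IsUnit (dlinkedB x * (dlinkedB x)ᴴ) := by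
  rw [dlinkedB_mul_conjTranspose, isUnit_diagonal, Pi.isUnit_iff]
  exact fun i => by simpa only [mul_comm] using (hx i).isUnit

theorem isUnit_conjTranspose_dlinkedC_mul {y : ∀ i, Fin (r i) → F}
    (hy : ∀ i, ∑ k, y i k * star (y i k) ≠ 0) : IsUnit ((dlinkedC y)ᴴ * dlinkedC y) := by
  rw [conjTranspose_dlinkedC_mul, isUnit_diagonal, Pi.isUnit_iff]
  exact fun i => (hy i).isUnit

theorem dlinkedStars_moorePenrose_general (A : Matrix (Fin n) (Fin n) F)
    (x y : ∀ i, Fin (r i) → F) (hx : ∀ i, ∑ k, star (x i k) * x i k ≠ 0)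
    (hy : ∀ i, ∑ k, y i k * star (y i k) ≠ 0) :
    letI B := dlinkedB x
    letI C := dlinkedC y
    IsMoorePenroseInverse (dlinkedStars A x y)
      (fromBlocks 0 ((Cᴴ * C)⁻¹ * Cᴴ) (Bᴴ * (B * Bᴴ)⁻¹)
        (-(Bᴴ * (B * Bᴴ)⁻¹ * A * (Cᴴ * C)⁻¹ * Cᴴ))) :=
  isMoorePenroseInverse_fromBlocks_of_isUnit A (isUnit_dlinkedB_mul_conjTranspose hx)
    (isUnit_conjTranspose_dlinkedC_mul hy)

end DLinked

/-- If `xᵢ*xᵢ ≠ 0` and `yᵢyᵢ* ≠ 0` for all `i` (so `BB*` and `C*C` are invertible),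
then the Moore–Penrose inverse of the D-linked stars matrix is
`N = [[0, (C*C)⁻¹C*], [B*(BB*)⁻¹, -B*(BB*)⁻¹ A (C*C)⁻¹C*]]`. -/
theorem dlinkedStars_moorePenrose
    {F : Type*} [Field F] [StarRing F] {n : ℕ} {r : Fin n → ℕ}
    (A : Matrix (Fin n) (Fin n) F) (x y : ∀ i, Fin (r i) → F)
    (hx : ∀ i k, x i k ≠ 0) (hy : ∀ i k, y i k ≠ 0)
    (hxs : ∀ i, (∑ k, star (x i k) * x i k) ≠ 0)
    (hys : ∀ i, (∑ k, y i k * star (y i k)) ≠ 0) :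
    letI B := dlinkedB x
    letI C := dlinkedC y
    letI M := dlinkedStars A x y
    letI N := Matrix.fromBlocks 0 ((Cᴴ * C)⁻¹ * Cᴴ) (Bᴴ * (B * Bᴴ)⁻¹)
      (-(Bᴴ * (B * Bᴴ)⁻¹ * A * (Cᴴ * C)⁻¹ * Cᴴ))
    M * N * M = M ∧ N * M * N = N ∧ (M * N)ᴴ = M * N ∧ (N * M)ᴴ = N * M :=
  have h := dlinkedStars_moorePenrose_general A x y hxs hys
  ⟨h.mul_mul_left, h.mul_mul_right, h.isHermitian_mul, h.isHermitian_mul_swap⟩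
end
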